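/- For any joint distribution P_{XY} on discrete alphabets and any positive integers K < M, it holds that I(X;[Y]_K) ≥ ((K-1)/M) · I(X;[Y]_M). -/

import Mathlib

/-!
For a fixed quantizer `f`, the mutual information `I(X; f(Y))` splits as `∑ m, D m`, where
`D m = P(f(Y) = m) · D(P_{X | f(Y) = m} ‖ P_X) ≥ 0` depends only on the marginal of `X` and on the
column `x ↦ P(X = x, f(Y) = m)`. Some `K - 1` of the `M` cells carry at least the fraction
`(K - 1) / M` of the sum; keeping these cells and merging all others into one further cell gives a
`K`-level quantizer whose mutual information is at least the sum over the kept cells.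

The `K - 1` cells are taken to be cyclically consecutive, `j, j + 1, …, j + K - 2` in `Fin M`:
averaging over `j` then gives the required fraction (`exists_cyclic_window`). The elementary
estimate `a - b ≤ a * log (a / b)` gives nonnegativity of `D m` (`cellInfo_nonneg`). Since a joint
mass is at most the marginal mass, the terms of `D m` are also bounded above by a summable
function, so that `∑'` and `⨆` take no junk values here (`summable_cellTerm`, `bddAbove_miBits`).
-/

open scoped BigOperators

/-- Mutual information (in bits) of a joint probability mass function `p` on `𝒳 × 𝒴`,
with the convention `0 · log 0 = 0`. -/
noncomputable def miBits {𝒳 𝒴 : Type*} (p : 𝒳 → 𝒴 → ℝ) : ℝ :=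
  ∑' x, ∑' y, p x y * Real.logb 2 (p x y / ((∑' y', p x y') * (∑' x', p x' y)))

/-- `p` is a joint probability mass function. -/
def IsJointPMF {𝒳 𝒴 : Type*} (p : 𝒳 → 𝒴 → ℝ) : Prop :=
  (∀ x y, 0 ≤ p x y) ∧ Summable (fun xy : 𝒳 × 𝒴 => p xy.1 xy.2) ∧ (∑' x, ∑' y, p x y) = 1

/-- Joint pmf of `(X, f(Y))` when `(X,Y) ~ p` and `f` is a deterministic `M`-level quantizer. -/
noncomputable def quantJoint {𝒳 𝒴 : Type*} (p : 𝒳 → 𝒴 → ℝ) {M : ℕ} (f : 𝒴 → Fin M) :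
    𝒳 → Fin M → ℝ :=
  fun x m => ∑' y, if f y = m then p x y else 0

/-- `I(X;[Y]_M)`: the best mutual information achievable by a deterministic `M`-level
quantizer of `Y`. -/
noncomputable def quantMI {𝒳 𝒴 : Type*} (p : 𝒳 → 𝒴 → ℝ) (M : ℕ) : ℝ :=
  ⨆ f : 𝒴 → Fin M, miBits (quantJoint p f)

/-- The information distillation function `ID_M(K, β)`. -/
noncomputable def ID (M K : ℕ) (β : ℝ) : ℝ :=
  sInf {v | ∃ p : Fin K → ℕ → ℝ, IsJointPMF p ∧ β ≤ miBits p ∧ v = quantMI p M}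

/-- Binary entropy function (bits). -/
noncomputable def hBin (t : ℝ) : ℝ :=
  -(t * Real.logb 2 t) - (1 - t) * Real.logb 2 (1 - t)

/-- Contribution to the mutual information (in bits) of a cell whose joint masses with `X` are
`s x`, where `r` is the marginal of `X`: the mass of the cell times the relative entropy of the
conditional law of `X` given the cell with respect to `r`. -/
noncomputable def cellInfo {𝒳 : Type*} (r s : 𝒳 → ℝ) : ℝ :=
  ∑' x, s x * Real.logb 2 (s x / (r x * ∑' x', s x'))

theorem sub_le_mul_log_div {a b : ℝ} (ha : 0 ≤ a) (hb : 0 ≤ b) (hab : b = 0 → a = 0) :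
    a - b ≤ a * Real.log (a / b) := by
  rcases ha.eq_or_lt with rfl | ha
  · simpa using hb
  have hb' : 0 < b := lt_of_le_of_ne hb (fun h => ha.ne' (hab h.symm))
  have h := Real.one_sub_inv_le_log_of_pos (div_pos ha hb')
  have h2 := mul_le_mul_of_nonneg_left h ha.le
  have h3 : a * (1 - (a / b)⁻¹) = a - b := by field_simp
  linarith

section Cell

variable {𝒳 : Type*} {r s : 𝒳 → ℝ}

theorem cellTerm_lower (hs : ∀ x, 0 ≤ s x) (hsr : ∀ x, s x ≤ r x) (hr : Summable r) (x : 𝒳) :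
    (s x - r x * ∑' x', s x') / Real.log 2 ≤
      s x * Real.logb 2 (s x / (r x * ∑' x', s x')) := by
  have hS : Summable s := Summable.of_nonneg_of_le hs hsr hr
  have hle : s x ≤ ∑' x', s x' := hS.le_tsum x (fun i _ => hs i)
  have h := sub_le_mul_log_div (hs x)
    (mul_nonneg ((hs x).trans (hsr x)) ((hs x).trans hle)) (fun h0 => by
      rcases mul_eq_zero.1 h0 with h0 | h0
      · exact le_antisymm (h0 ▸ hsr x) (hs x)
      · exact le_antisymm (h0 ▸ hle) (hs x))
  rw [Real.logb, ← mul_div_assoc]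
  exact div_le_div_of_nonneg_right h (Real.log_pos one_lt_two).le

theorem cellTerm_upper (hs : ∀ x, 0 ≤ s x) (hsr : ∀ x, s x ≤ r x) (hr : Summable r) (x : 𝒳) :
    s x * Real.logb 2 (s x / (r x * ∑' x', s x')) ≤
      s x * (-Real.logb 2 (∑' x', s x')) := by
  have hS : Summable s := Summable.of_nonneg_of_le hs hsr hr
  have hle : s x ≤ ∑' x', s x' := hS.le_tsum x (fun i _ => hs i)
  rcases (hs x).eq_or_lt with h0 | h0
  · simp [← h0]
  have hrx : 0 < r x := h0.trans_le (hsr x)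
  have hq : 0 < ∑' x', s x' := h0.trans_le hle
  refine mul_le_mul_of_nonneg_left ?_ h0.le
  rw [← Real.logb_inv]
  refine Real.logb_le_logb_of_le one_lt_two (by positivity) ?_
  rw [div_le_iff₀ (by positivity)]
  have : (∑' x', s x')⁻¹ * (r x * ∑' x', s x') = r x := by field_simp
  rw [this]
  exact hsr x

theorem summable_cellTerm (hs : ∀ x, 0 ≤ s x) (hsr : ∀ x, s x ≤ r x) (hr : Summable r) :
    Summable (fun x => s x * Real.logb 2 (s x / (r x * ∑' x', s x'))) := by
  have hS : Summable s := Summable.of_nonneg_of_le hs hsr hr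
  have hlow : Summable (fun x => (s x - r x * ∑' x', s x') / Real.log 2) :=
    (hS.sub (hr.mul_right _)).div_const _
  have hup : Summable (fun x => s x * (-Real.logb 2 (∑' x', s x'))) := hS.mul_right _
  have h := Summable.of_nonneg_of_le
    (fun x => sub_nonneg.2 (cellTerm_lower hs hsr hr x))
    (fun x => sub_le_sub_right (cellTerm_upper hs hsr hr x) _) (hup.sub hlow)
  simpa using h.add hlow

theorem cellInfo_nonneg (hs : ∀ x, 0 ≤ s x) (hsr : ∀ x, s x ≤ r x) (hr : Summable r)
    (hr1 : ∑' x, r x = 1) : 0 ≤ cellInfo r s := by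
  have hS : Summable s := Summable.of_nonneg_of_le hs hsr hr
  have hlow : Summable (fun x => (s x - r x * ∑' x', s x') / Real.log 2) :=
    (hS.sub (hr.mul_right _)).div_const _
  have h := hlow.tsum_le_tsum (cellTerm_lower hs hsr hr) (summable_cellTerm hs hsr hr)
  rw [tsum_div_const, hS.tsum_sub (hr.mul_right _), tsum_mul_right, hr1] at h
  simpa [cellInfo] using h

theorem cellInfo_le (hs : ∀ x, 0 ≤ s x) (hsr : ∀ x, s x ≤ r x) (hr : Summable r) :
    cellInfo r s ≤ 1 / Real.log 2 := by
  have hS : Summable s := Summable.of_nonneg_of_le hs hsr hr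
  have h := (summable_cellTerm hs hsr hr).tsum_le_tsum (cellTerm_upper hs hsr hr)
    (hS.mul_right _)
  rw [tsum_mul_right] at h
  refine h.trans ?_
  have hq : 0 ≤ ∑' x, s x := tsum_nonneg hs
  -- `q - 1 ≤ q * log q` bounds `-q * log q` by `1`.
  have h2 := sub_le_mul_log_div hq zero_le_one (fun h => absurd h one_ne_zero)
  rw [div_one] at h2
  rw [Real.logb, ← neg_div, ← mul_div_assoc]
  exact div_le_div_of_nonneg_right (by linarith) (Real.log_pos one_lt_two).le

end Cell

/-- Some cyclic translate `j + c` of a pattern `c` of `k` indices carries at least the fraction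
`k / M` of the total of `D`, since the average over all translations `j` is exactly that. -/
theorem exists_cyclic_window {M : ℕ} [NeZero M] (k : ℕ) (c : Fin k → Fin M) (D : Fin M → ℝ) :
    ∃ j : Fin M, (k : ℝ) / M * ∑ m, D m ≤ ∑ i, D (j + c i) := by
  have hM : (M : ℝ) ≠ 0 := NeZero.ne _
  have hsum : ∑ j : Fin M, ∑ i, D (j + c i) = ∑ _j : Fin M, (k : ℝ) / M * ∑ m, D m := by
    rw [Finset.sum_comm]
    have h : ∀ i, ∑ j : Fin M, D (j + c i) = ∑ m, D m := fun i =>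
      Equiv.sum_comp (Equiv.addRight (c i)) D
    simp only [h, Finset.sum_const, Finset.card_univ, Fintype.card_fin, nsmul_eq_mul]
    field_simp
  obtain ⟨j, -, hj⟩ := Finset.exists_le_of_sum_le Finset.univ_nonempty hsum.ge
  exact ⟨j, hj⟩

section Quantizer

variable {𝒳 𝒴 : Type*} {p : 𝒳 → 𝒴 → ℝ}

theorem summable_quantTerm (hp : IsJointPMF p) {M : ℕ} (f : 𝒴 → Fin M) (x : 𝒳) (m : Fin M) :
    Summable (fun y => if f y = m then p x y else 0) := by
  have h : Summable (fun y => p x y) := hp.2.1.prod_factor x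
  refine Summable.of_nonneg_of_le (fun y => ?_) (fun y => ?_) h
  · split_ifs
    exacts [hp.1 x y, le_rfl]
  · split_ifs
    exacts [le_rfl, hp.1 x y]

theorem quantJoint_nonneg (hp : IsJointPMF p) {M : ℕ} (f : 𝒴 → Fin M) (x : 𝒳) (m : Fin M) :
    0 ≤ quantJoint p f x m :=
  tsum_nonneg fun y => by
    split_ifs
    exacts [hp.1 x y, le_rfl]

theorem sum_quantJoint (hp : IsJointPMF p) {M : ℕ} (f : 𝒴 → Fin M) (x : 𝒳) :
    ∑ m, quantJoint p f x m = ∑' y, p x y := by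
  unfold quantJoint
  rw [← Summable.tsum_finsetSum fun m _ => summable_quantTerm hp f x m]
  simp

theorem quantJoint_le (hp : IsJointPMF p) {M : ℕ} (f : 𝒴 → Fin M) (x : 𝒳) (m : Fin M) :
    quantJoint p f x m ≤ ∑' y, p x y := by
  rw [← sum_quantJoint hp f x]
  exact Finset.single_le_sum (f := fun m => quantJoint p f x m)
    (fun i _ => quantJoint_nonneg hp f x i) (Finset.mem_univ m)

theorem summable_marginal (hp : IsJointPMF p) : Summable (fun x => ∑' y, p x y) :=
  hp.2.1.prod

theorem miBits_quantJoint (hp : IsJointPMF p) {M : ℕ} (f : 𝒴 → Fin M) :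
    miBits (quantJoint p f) =
      ∑ m, cellInfo (fun x => ∑' y, p x y) (fun x => quantJoint p f x m) := by
  unfold miBits cellInfo
  rw [← Summable.tsum_finsetSum fun m _ => summable_cellTerm
    (fun x => quantJoint_nonneg hp f x m) (fun x => quantJoint_le hp f x m)
    (summable_marginal hp)]
  refine tsum_congr fun x => ?_
  rw [tsum_fintype]
  refine Finset.sum_congr rfl fun m _ => ?_
  rw [tsum_fintype, sum_quantJoint hp]

theorem cellInfo_quantJoint_nonneg (hp : IsJointPMF p) {M : ℕ} (f : 𝒴 → Fin M) (m : Fin M) :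
    0 ≤ cellInfo (fun x => ∑' y, p x y) (fun x => quantJoint p f x m) :=
  cellInfo_nonneg (fun x => quantJoint_nonneg hp f x m) (fun x => quantJoint_le hp f x m)
    (summable_marginal hp) hp.2.2

theorem bddAbove_miBits (hp : IsJointPMF p) (M : ℕ) :
    BddAbove (Set.range fun f : 𝒴 → Fin M => miBits (quantJoint p f)) := by
  refine ⟨∑ _m : Fin M, 1 / Real.log 2, ?_⟩
  rintro _ ⟨f, rfl⟩
  simp only [miBits_quantJoint hp]
  exact Finset.sum_le_sum fun m _ => cellInfo_le (fun x => quantJoint_nonneg hp f x m)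
    (fun x => quantJoint_le hp f x m) (summable_marginal hp)

/-- Every `M`-level quantizer can be coarsened to a `(k + 1)`-level one that retains the fraction
`k / M` of the mutual information. -/
theorem exists_coarsening (hp : IsJointPMF p) {M k : ℕ} (hk : k < M) (f : 𝒴 → Fin M) :
    ∃ g : 𝒴 → Fin (k + 1),
      (k : ℝ) / M * miBits (quantJoint p f) ≤ miBits (quantJoint p g) := by
  have : NeZero M := ⟨by omega⟩
  obtain ⟨j, hj⟩ := exists_cyclic_window k (fun i => Fin.castLE hk.le i)
    (fun m => cellInfo (fun x => ∑' y, p x y) (fun x => quantJoint p f x m))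
  -- The `i`-th cell of the window gets label `i < k`; every other cell gets label `k`.
  refine ⟨fun y => ⟨min (f y - j).val k, by omega⟩, ?_⟩
  rw [miBits_quantJoint hp f, miBits_quantJoint hp, Fin.sum_univ_castSucc]
  refine hj.trans (le_add_of_le_of_nonneg (le_of_eq ?_) (cellInfo_quantJoint_nonneg hp _ _))
  refine Finset.sum_congr rfl fun i _ => ?_
  congr 1
  funext x
  unfold quantJoint
  refine tsum_congr fun y => if_congr ?_ rfl rfl
  have hi := i.isLt
  rw [← sub_eq_iff_eq_add', Fin.ext_iff, Fin.ext_iff]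
  simp only [Fin.val_castLE, Fin.val_castSucc]
  omega

end Quantizer

/-- Corollary 1: double quantization. For `K < M`,
`I(X;[Y]_K) ≥ ((K-1)/M) I(X;[Y]_M)`. -/
theorem double_quantization {𝒳 𝒴 : Type*} [Countable 𝒳] [Countable 𝒴]
    (p : 𝒳 → 𝒴 → ℝ) (hp : IsJointPMF p) (K M : ℕ) (hK : 0 < K) (hKM : K < M) :
    ((K : ℝ) - 1) / (M : ℝ) * quantMI p M ≤ quantMI p K := by
  obtain ⟨k, rfl⟩ : ∃ k, K = k + 1 := ⟨K - 1, by omega⟩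
  have : Nonempty (Fin M) := ⟨⟨0, by omega⟩⟩
  have hk : (((k + 1 : ℕ) : ℝ) - 1) = k := by push_cast; ring
  rw [hk]
  unfold quantMI
  rw [Real.mul_iSup_of_nonneg (by positivity)]
  refine ciSup_le fun f => ?_
  obtain ⟨g, hg⟩ := exists_coarsening hp (by omega : k < M) f
  exact hg.trans (le_ciSup (bddAbove_miBits hp (k + 1)) g)
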